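/- Let v_1, …, v_m ∈ ℤ^n be pairwise distinct primitive vectors, λ_1, …, λ_m ∈ ℝ, and l_j(u) = ⟨u, v_j⟩ − λ_j. For each j let (δ_j^{(i)})_{i∈ℕ} be a sequence of real numbers converging to 0, and set l_j^{(i)} = l_j + δ_j^{(i)}. Fix w ∈ ℤ^n such that the index set J_w = {j : ⟨w, v_j⟩ ≠ 0} has at least two elements. Let Trop(P, w) = {u ∈ ℝ^n : the minimum of {l_j(u) : j ∈ J_w} is attained by at least two distinct indices in J_w} and Trop(P^{(i)}, w) = {u ∈ ℝ^n : the minimum of {l_j^{(i)}(u) : j ∈ J_w} is attained by at least two distinct indices in J_w}. Then these sets are nonempty and Trop(P^{(i)}, w) converges to Trop(P, w) with respect to the Hausdorff distance: for every ε > 0 there exists N such that for all i ≥ N, every point of Trop(P, w) is within distance ε of some point of Trop(P^{(i)}, w) and conversely. -/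

import Mathlib

open scoped Classical

noncomputable section

/-- Integer inner product `⟨w, v⟩ = ∑ i, w i * v i` on `ℤ^n`. -/
def zdot {n : ℕ} (w v : Fin n → ℤ) : ℤ := ∑ i, w i * v i

/-- A lattice vector is primitive if the gcd of its entries is `1`. -/
def Primitive {n : ℕ} (w : Fin n → ℤ) : Prop := Finset.univ.gcd w = 1

/-- The affine function `l_j(u) = ⟨u, v_j⟩ - λ_j` on Euclidean space. -/
def lfE {n m : ℕ} (v : Fin m → Fin n → ℤ) (lam : Fin m → ℝ) (j : Fin m)
    (u : EuclideanSpace ℝ (Fin n)) : ℝ :=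
  (∑ i, u i * (v j i : ℝ)) - lam j

/-- The tropicalization of the family `{l_1, …, l_s}`: the set of points at which the pointwise
minimum of the family is attained by at least two distinct indices. -/
def TropAll {n s : ℕ} (v : Fin s → Fin n → ℤ) (lam : Fin s → ℝ) :
    Set (EuclideanSpace ℝ (Fin n)) :=
  {u | ∃ j₁ j₂ : Fin s, j₁ ≠ j₂ ∧ lfE v lam j₁ u = lfE v lam j₂ u ∧
        ∀ j : Fin s, lfE v lam j₁ u ≤ lfE v lam j u}

/-- The tropicalization of `P` relative to the lattice vector `w` (Euclidean version): the set
of points at which the minimum of `{l_j(u) : j ∈ J_w}` is attained by at least two distinct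
indices of `J_w = {j : ⟨w, v_j⟩ ≠ 0}`. -/
def TropRelE {n m : ℕ} (v : Fin m → Fin n → ℤ) (lam : Fin m → ℝ) (w : Fin n → ℤ) :
    Set (EuclideanSpace ℝ (Fin n)) :=
  {u | ∃ j₁ j₂ : Fin m, j₁ ≠ j₂ ∧ zdot w (v j₁) ≠ 0 ∧ zdot w (v j₂) ≠ 0 ∧
        lfE v lam j₁ u = lfE v lam j₂ u ∧
        ∀ j : Fin m, zdot w (v j) ≠ 0 → lfE v lam j₁ u ≤ lfE v lam j u}

/-- The direction `v_{j₂} - v_{j₁}` in Euclidean space. -/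
def dirE {n m : ℕ} (v : Fin m → Fin n → ℤ) (j₁ j₂ : Fin m) : EuclideanSpace ℝ (Fin n) :=
  WithLp.toLp 2 (fun i => (v j₂ i : ℝ) - (v j₁ i : ℝ))

lemma lfE_add {n m : ℕ} (v : Fin m → Fin n → ℤ) (mu : Fin m → ℝ) (j₁ j₂ k : Fin m)
    (u : EuclideanSpace ℝ (Fin n)) (t : ℝ) :
    lfE v mu k (u + t • dirE v j₁ j₂) =
      lfE v mu k u + t * ∑ i, ((v j₂ i : ℝ) - (v j₁ i : ℝ)) * (v k i : ℝ) := by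
  have h : ∑ i, (u + t • dirE v j₁ j₂) i * (v k i : ℝ) =
      ∑ i, u i * (v k i : ℝ) + t * ∑ i, ((v j₂ i : ℝ) - (v j₁ i : ℝ)) * (v k i : ℝ) := by
    rw [Finset.mul_sum, ← Finset.sum_add_distrib]
    refine Finset.sum_congr rfl fun i _ => ?_
    simp [dirE]
    ring
  unfold lfE
  rw [h]
  ring

lemma dir_sq {n m : ℕ} (v : Fin m → Fin n → ℤ) (hdist : Function.Injective v)
    (j₁ j₂ : Fin m) (h : j₁ ≠ j₂) :
    1 ≤ ∑ i, ((v j₂ i : ℝ) - (v j₁ i : ℝ)) * (v j₂ i : ℝ)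
      - ∑ i, ((v j₂ i : ℝ) - (v j₁ i : ℝ)) * (v j₁ i : ℝ) := by
  have hne : ∃ i, v j₂ i ≠ v j₁ i := by
    by_contra! hc
    exact h (hdist (funext fun i => (hc i).symm))
  obtain ⟨i, hi⟩ := hne
  rw [← Finset.sum_sub_distrib]
  have h1 : (1 : ℝ) ≤ ((v j₂ i : ℝ) - (v j₁ i : ℝ)) * (v j₂ i : ℝ)
      - ((v j₂ i : ℝ) - (v j₁ i : ℝ)) * (v j₁ i : ℝ) := by
    have : (1 : ℤ) ≤ (v j₂ i - v j₁ i) ^ 2 := by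
      have := sq_pos_of_ne_zero (sub_ne_zero.mpr hi)
      omega
    have h2 : (1 : ℝ) ≤ ((v j₂ i : ℝ) - (v j₁ i : ℝ)) ^ 2 := by exact_mod_cast this
    nlinarith
  refine h1.trans (Finset.single_le_sum (f := fun i => ((v j₂ i : ℝ) - (v j₁ i : ℝ)) * (v j₂ i : ℝ)
      - ((v j₂ i : ℝ) - (v j₁ i : ℝ)) * (v j₁ i : ℝ)) (fun k _ => ?_) (Finset.mem_univ i))
  have := sq_nonneg ((v j₂ k : ℝ) - (v j₁ k : ℝ))
  show (0 : ℝ) ≤ _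
  nlinarith

lemma lfE_cont {n m : ℕ} (v : Fin m → Fin n → ℤ) (mu : Fin m → ℝ) (k : Fin m) :
    Continuous (lfE v mu k) := by
  unfold lfE
  fun_prop

lemma exists_argmin {n m : ℕ} (v : Fin m → Fin n → ℤ) (mu : Fin m → ℝ) (w : Fin n → ℤ)
    (j₁ : Fin m) (hj₁ : zdot w (v j₁) ≠ 0) (y : EuclideanSpace ℝ (Fin n)) :
    ∃ k, zdot w (v k) ≠ 0 ∧ ∀ j, zdot w (v j) ≠ 0 → lfE v mu k y ≤ lfE v mu j y := by
  obtain ⟨k, hk, hk'⟩ := Finset.exists_min_image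
    (Finset.univ.filter fun j => zdot w (v j) ≠ 0) (fun j => lfE v mu j y) ⟨j₁, by simp [hj₁]⟩
  exact ⟨k, by simpa using hk, fun j hj => hk' j (by simp [hj])⟩

lemma core {n m : ℕ} (v : Fin m → Fin n → ℤ) (hdist : Function.Injective v)
    (mu : Fin m → ℝ) (w : Fin n → ℤ) (j₁ j₂ : Fin m) (h12 : j₁ ≠ j₂)
    (hj₁ : zdot w (v j₁) ≠ 0) (hj₂ : zdot w (v j₂) ≠ 0)
    (u : EuclideanSpace ℝ (Fin n)) (C t : ℝ) (ht : 0 ≤ t) (hC : 2 * C < t)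
    (h1 : ∀ k, zdot w (v k) ≠ 0 → lfE v mu j₁ u - C ≤ lfE v mu k u)
    (h2 : ∀ k, zdot w (v k) ≠ 0 → lfE v mu j₂ u - C ≤ lfE v mu k u) :
    ∃ u' ∈ TropRelE v mu w, dist u u' ≤ t * ‖dirE v j₁ j₂‖ := by
  set d := dirE v j₁ j₂ with hd
  let A : Fin m → Set (EuclideanSpace ℝ (Fin n)) := fun k =>
    {y | ∀ j, zdot w (v j) ≠ 0 → lfE v mu k y ≤ lfE v mu j y}
  have hA : ∀ k, IsClosed (A k) := by
    intro k
    have : A k = ⋂ j, ⋂ (_ : zdot w (v j) ≠ 0), {y | lfE v mu k y ≤ lfE v mu j y} := by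
      ext y; simp [A]
    rw [this]
    exact isClosed_iInter fun j => isClosed_iInter fun _ =>
      isClosed_le (lfE_cont v mu k) (lfE_cont v mu j)
  obtain ⟨k0, hk0, hk0'⟩ := exists_argmin v mu w j₁ hj₁ (u + t • d)
  obtain ⟨k1, hk1, hk1'⟩ := exists_argmin v mu w j₁ hj₁ (u + (-t) • d)
  have hne : k1 ≠ k0 := by
    rintro rfl
    have e1 := hk0' j₁ hj₁
    have e2 := hk1' j₂ hj₂
    rw [hd, lfE_add, lfE_add] at e1 e2
    have e3 := h1 k1 hk1
    have e4 := h2 k1 hk1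
    have e5 := dir_sq v hdist j₁ j₂ h12
    have e6 := mul_le_mul_of_nonneg_left e5 ht
    rw [mul_sub] at e6
    linarith
  have hpre : IsPreconnected (Metric.closedBall u (t * ‖d‖)) :=
    (convex_closedBall u _).isPreconnected
  have hB : IsClosed (⋃ k ∈ {k | k ≠ k0 ∧ zdot w (v k) ≠ 0}, A k) :=
    (Set.toFinite _).isClosed_biUnion fun k _ => hA k
  obtain ⟨y, hy, hy0, hyB⟩ := isPreconnected_closed_iff.mp hpre (A k0) _ (hA k0) hB
    (by
      intro y _
      obtain ⟨k, hk, hk'⟩ := exists_argmin v mu w j₁ hj₁ y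
      by_cases hkk : k = k0
      · left; rw [← hkk]; exact hk'
      · right
        exact Set.mem_biUnion (show k ∈ {k | k ≠ k0 ∧ zdot w (v k) ≠ 0} from ⟨hkk, hk⟩) hk')
    ⟨u + t • d, by simp [dist_eq_norm, norm_smul, abs_of_nonneg ht], hk0'⟩
    ⟨u + (-t) • d, by simp [dist_eq_norm, norm_smul, abs_of_nonneg ht],
      Set.mem_biUnion (show k1 ∈ {k | k ≠ k0 ∧ zdot w (v k) ≠ 0} from ⟨hne, hk1⟩) hk1'⟩
  simp only [Set.mem_iUnion] at hyB
  obtain ⟨k, ⟨hkne, hkw⟩, hyk⟩ := hyB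
  refine ⟨y, ⟨k0, k, hkne.symm, hk0, hkw, le_antisymm (hy0 k hkw) (hyk k0 hk0), hy0⟩, ?_⟩
  rw [dist_comm]
  exact hy

lemma trop_nonempty {n m : ℕ} (v : Fin m → Fin n → ℤ) (hdist : Function.Injective v)
    (mu : Fin m → ℝ) (w : Fin n → ℤ)
    (hw : ∃ j₁ j₂ : Fin m, j₁ ≠ j₂ ∧ zdot w (v j₁) ≠ 0 ∧ zdot w (v j₂) ≠ 0) :
    (TropRelE v mu w).Nonempty := by
  obtain ⟨j₁, j₂, h12, hj₁, hj₂⟩ := hw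
  obtain ⟨k, _, hk⟩ := exists_argmin v mu w j₁ hj₁ 0
  have a1 := hk j₁ hj₁
  have a2 := hk j₂ hj₂
  obtain ⟨y, hy, _⟩ := core v hdist mu w j₁ j₂ h12 hj₁ hj₂ 0
    ((lfE v mu j₁ 0 - lfE v mu k 0) + (lfE v mu j₂ 0 - lfE v mu k 0))
    (2 * ((lfE v mu j₁ 0 - lfE v mu k 0) + (lfE v mu j₂ 0 - lfE v mu k 0)) + 1)
    (by linarith) (by linarith)
    (fun j hj => by have := hk j hj; linarith) (fun j hj => by have := hk j hj; linarith)
  exact ⟨y, hy⟩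

lemma trop_near {n m : ℕ} (v : Fin m → Fin n → ℤ) (hdist : Function.Injective v)
    (lam mu : Fin m → ℝ) (w : Fin n → ℤ) (η M : ℝ) (hη : 0 < η)
    (hM : ∀ j₁ j₂, ‖dirE v j₁ j₂‖ ≤ M) (hc : ∀ j, |lam j - mu j| ≤ η)
    (u : EuclideanSpace ℝ (Fin n)) (hu : u ∈ TropRelE v lam w) :
    ∃ u' ∈ TropRelE v mu w, dist u u' ≤ 5 * η * M := by
  obtain ⟨j₁, j₂, h12, hj₁, hj₂, he, hmin⟩ := hu
  have key : ∀ j, lfE v mu j u = lfE v lam j u + (lam j - mu j) := by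
    intro j; unfold lfE; ring
  have hb := fun j => abs_le.mp (hc j)
  obtain ⟨y, hy, hyd⟩ := core v hdist mu w j₁ j₂ h12 hj₁ hj₂ u (2 * η) (5 * η)
    (by linarith) (by linarith)
    (fun k hk => by
      rw [key, key]; have := hmin k hk; have := hb k; have := hb j₁; linarith [(hb k).1, (hb j₁).2])
    (fun k hk => by
      rw [key, key]; have := hmin k hk; linarith [(hb k).1, (hb j₂).2])
  exact ⟨y, hy, hyd.trans (mul_le_mul_of_nonneg_left (hM _ _) (by linarith))⟩

/-- With `l_j(u) = ⟨u, v_j⟩ - λ_j` (pairwise distinct primitive `v_j`) and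
`l_j^{(i)} = l_j + δ_j^{(i)}` where `δ_j^{(i)} → 0` for each `j`, fix `w ∈ ℤ^n` whose index set
`J_w` has at least two elements. Then `Trop(P, w)` and each `Trop(P^{(i)}, w)` are nonempty and
`Trop(P^{(i)}, w)` converges to `Trop(P, w)` with respect to the Hausdorff distance. -/
theorem statement10 {n m : ℕ}
    (v : Fin m → Fin n → ℤ) (lam : Fin m → ℝ)
    (hdist : Function.Injective v)
    (hprim : ∀ j, Primitive (v j))
    (δ : ℕ → Fin m → ℝ)
    (hδ : ∀ j, Filter.Tendsto (fun i => δ i j) Filter.atTop (nhds 0))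
    (w : Fin n → ℤ)
    (hw : ∃ j₁ j₂ : Fin m, j₁ ≠ j₂ ∧ zdot w (v j₁) ≠ 0 ∧ zdot w (v j₂) ≠ 0) :
    (TropRelE v lam w).Nonempty ∧
    (∀ i, (TropRelE v (fun j => lam j - δ i j) w).Nonempty) ∧
    ∀ ε > (0 : ℝ), ∃ N : ℕ, ∀ i ≥ N,
      (∀ u₁ ∈ TropRelE v lam w,
        ∃ u₂ ∈ TropRelE v (fun j => lam j - δ i j) w, dist u₁ u₂ ≤ ε) ∧
      (∀ u₂ ∈ TropRelE v (fun j => lam j - δ i j) w,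
        ∃ u₁ ∈ TropRelE v lam w, dist u₁ u₂ ≤ ε) := by
  refine ⟨trop_nonempty v hdist lam w hw, fun i => trop_nonempty v hdist _ w hw, ?_⟩
  intro ε hε
  obtain ⟨M, hM0, hM⟩ : ∃ M : ℝ, 0 < M ∧ ∀ j₁ j₂, ‖dirE v j₁ j₂‖ ≤ M := by
    obtain ⟨M, hM⟩ := (Set.finite_range fun p : Fin m × Fin m => ‖dirE v p.1 p.2‖).bddAbove
    exact ⟨max M 1, by positivity, fun a b => (hM ⟨(a, b), rfl⟩).trans (le_max_left _ _)⟩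
  have hη : 0 < ε / (5 * M) := by positivity
  have hE : 5 * (ε / (5 * M)) * M = ε := by field_simp
  have hev : ∀ᶠ i in Filter.atTop, ∀ j, |δ i j| < ε / (5 * M) := by
    rw [Filter.eventually_all]
    intro j
    have := (Metric.tendsto_nhds.mp (hδ j)) _ hη
    simpa [Real.dist_eq] using this
  obtain ⟨N, hN⟩ := Filter.eventually_atTop.mp hev
  refine ⟨N, fun i hi => ⟨fun u hu => ?_, fun u hu => ?_⟩⟩
  · rw [← hE]
    exact trop_near v hdist lam _ w _ M hη hM (fun j => by simpa using (hN i hi j).le) u hu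
  · rw [← hE]
    obtain ⟨y, hy, hyd⟩ := trop_near v hdist _ lam w _ M hη hM
      (fun j => by simpa using (hN i hi j).le) u hu
    exact ⟨y, hy, by rwa [dist_comm]⟩
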